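/- Enclosed annuli. Let ε > 0, let A and B be closed topological annuli in ℂ, let U be a bounded connected component of ℂ ∖ A and let V be a bounded connected component of ℂ ∖ B. Assume that U ∪ V is an open set homeomorphic to ℝ² and that A ∪ U ∪ B ∪ V is a closed Jordan disk. Put A □ B := (A ∪ U ∪ B ∪ V) ∖ (U ∪ V), the annulus enclosed by A and B. If mod(A) ≥ 2ε and mod(B) ≥ 2ε, then W(Γ) ≤ 1/ε, where Γ is the family of curves contained in A □ B joining the frontier of U ∪ V to the frontier of A ∪ U ∪ B ∪ V; i.e., the enclosed annulus A □ B has modulus at least ε. -/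

import Mathlib

noncomputable section

open MeasureTheory Set Metric Bornology
open scoped ENNReal NNReal

/-- A curve: continuous on `[0,1]` and continuously differentiable on `(0,1)`. -/
def IsCurve (γ : ℝ → ℂ) : Prop :=
  ContinuousOn γ (Icc 0 1) ∧ ContDiffOn ℝ 1 γ (Ioo 0 1)

/-- The extremal width of a family of curves: the infimum of `∫ ρ² dA` over all Borel
measurable metrics `ρ : ℂ → [0,∞]` that give every curve of the family length at least `1`
(the infimum over the empty set being `∞`). -/
def extremalWidth (F : Set (ℝ → ℂ)) : ℝ≥0∞ :=
  ⨅ ρ ∈ {ρ : ℂ → ℝ≥0∞ | Measurable ρ ∧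
      ∀ γ ∈ F, 1 ≤ ∫⁻ t in Ioo (0:ℝ) 1, ρ (γ t) * (‖deriv γ t‖₊ : ℝ≥0∞)},
    ∫⁻ z, ρ z ^ 2

/-- The curves contained in `S`, starting in `X` and ending in `Y`. -/
def curveFamily (S X Y : Set ℂ) : Set (ℝ → ℂ) :=
  {γ : ℝ → ℂ | IsCurve γ ∧ (∀ t ∈ Icc (0:ℝ) 1, γ t ∈ S) ∧ γ 0 ∈ X ∧ γ 1 ∈ Y}

/-- The extremal width `W_S(X, Y)`. -/
def widthIn (S X Y : Set ℂ) : ℝ≥0∞ := extremalWidth (curveFamily S X Y)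

/-- The point `e^{2πit}` of the unit circle. -/
def unitCirc (t : ℝ) : ℂ := Complex.exp (2 * Real.pi * Complex.I * t)

/-- The carrier of the closed topological annulus parametrized by `α` (on the standard
round annulus `{1 ≤ |z| ≤ 2}`). -/
def annCarrier (α : ℂ → ℂ) : Set ℂ := α '' (closedBall 0 2 \ ball 0 1)

/-- The modulus of the closed topological annulus parametrized by `α`. -/
def annModulus (α : ℂ → ℂ) : ℝ≥0∞ :=
  (widthIn (annCarrier α) (α '' sphere 0 1) (α '' sphere 0 2))⁻¹


/-!
Every curve of the enclosed annulus starts on `∂U` or on `∂V`; say on `∂U`. It avoids `U` and ends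
outside the interior of `A ∪ U`, so it stays in `A` until it first leaves that interior. Since `∂U`
lies on one boundary circle of `A` and `∂(A ∪ U)` on the other, this initial arc crosses `A`. Hence
the curve family overflows `Γ_A ∪ Γ_B`, and the extremal width is monotone and subadditive.

That `∂U` and `∂(A ∪ U)` lie on opposite circles is plane topology. Instead of the Jordan curve
theorem we use Borsuk's criterion: for compact `K` and `p ∉ K`, the function `z - p` has a
continuous logarithm on `K` exactly when `p` lies in the unbounded component of `ℂ ∖ K`.
-/

/-! ### Continuous logarithms -/

section Logarithm

variable {X Y : Type*} [TopologicalSpace X] [TopologicalSpace Y] {s t : Set X} {f g : X → ℂ}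

/-- The function `f` has a continuous logarithm on `s`: a function `L`, whose values off `s` are
irrelevant, continuous on `s` and with `exp ∘ L = f` there. For `f z = z - p` this expresses that
`s` does not wind around `p`. -/
def HasLogOn (f : X → ℂ) (s : Set X) : Prop :=
  ∃ L : X → ℂ, ContinuousOn L s ∧ EqOn (Complex.exp ∘ L) f s

theorem hasLogOn_iff_exists_continuousMap :
    HasLogOn f s ↔ ∃ L : C(s, ℂ), ∀ x, Complex.exp (L x) = f x := by
  constructor
  · rintro ⟨L, hL, hLf⟩
    exact ⟨⟨s.domRestrict L, hL.domRestrict⟩, fun x ↦ hLf x.2⟩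
  · rintro ⟨L, hL⟩
    have extend_eq (x : s) : Function.extend Subtype.val L 0 (x : X) = L x :=
      Subtype.val_injective.extend_apply L 0 x
    refine ⟨Function.extend Subtype.val L 0, ?_, fun x hx ↦ ?_⟩
    · exact continuousOn_iff_continuous_domRestrict.2
        (L.continuous.congr fun x ↦ (extend_eq x).symm)
    · exact (congrArg Complex.exp (extend_eq ⟨x, hx⟩)).trans (hL ⟨x, hx⟩)

namespace HasLogOn

theorem mono (h : HasLogOn f t) (hst : s ⊆ t) : HasLogOn f s :=
  let ⟨L, hL, hLf⟩ := h
  ⟨L, hL.mono hst, hLf.mono hst⟩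

theorem congr (h : HasLogOn f s) (hfg : EqOn f g s) : HasLogOn g s :=
  let ⟨L, hL, hLf⟩ := h
  ⟨L, hL, hLf.trans hfg⟩

theorem comp {f : Y → ℂ} {t : Set Y} {φ : X → Y} (h : HasLogOn f t) (hφ : ContinuousOn φ s)
    (hst : MapsTo φ s t) : HasLogOn (f ∘ φ) s :=
  let ⟨L, hL, hLf⟩ := h
  ⟨L ∘ φ, hL.comp hφ hst, hLf.comp_right hst⟩

theorem mul (hf : HasLogOn f s) (hg : HasLogOn g s) : HasLogOn (fun x ↦ f x * g x) s := by
  obtain ⟨L, hL, hLf⟩ := hf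
  obtain ⟨M, hM, hMg⟩ := hg
  refine ⟨fun x ↦ L x + M x, hL.add hM, fun x hx ↦ ?_⟩
  simp only [Function.comp_apply, Complex.exp_add, ← hLf hx, ← hMg hx]

theorem zpow (hf : HasLogOn f s) (n : ℤ) : HasLogOn (fun x ↦ f x ^ n) s := by
  obtain ⟨L, hL, hLf⟩ := hf
  refine ⟨fun x ↦ n * L x, continuousOn_const.mul hL, fun x hx ↦ ?_⟩
  simp only [Function.comp_apply, Complex.exp_int_mul, ← hLf hx]

theorem ne_zero (hf : HasLogOn f s) {x : X} (hx : x ∈ s) : f x ≠ 0 := by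
  obtain ⟨L, -, hLf⟩ := hf
  exact hLf hx ▸ Complex.exp_ne_zero (L x)

theorem image [T2Space Y] {f : Y → ℂ} {φ : X → Y} (h : HasLogOn (f ∘ φ) s) (hs : IsCompact s)
    (hφ : ContinuousOn φ s) (hinj : InjOn φ s) : HasLogOn f (φ '' s) := by
  have : CompactSpace s := isCompact_iff_compactSpace.1 hs
  have continuous_equiv : Continuous (Equiv.Set.imageOfInjOn φ s hinj) :=
    hφ.domRestrict.subtype_mk _
  let e : s ≃ₜ φ '' s := continuous_equiv.homeoOfEquivCompactToT2
  obtain ⟨L, hL⟩ := hasLogOn_iff_exists_continuousMap.1 h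
  refine hasLogOn_iff_exists_continuousMap.2 ⟨L.comp e.symm, fun y ↦ ?_⟩
  exact (hL (e.symm y)).trans (congrArg (fun y : φ '' s ↦ f y) (e.apply_symm_apply y))

theorem of_homotopy {H : unitInterval × X → ℂ} (hH : ContinuousOn H (univ ×ˢ s))
    (hne : ∀ τ, ∀ x ∈ s, H (τ, x) ≠ 0) (h₀ : HasLogOn (fun x ↦ H (0, x)) s) :
    HasLogOn (fun x ↦ H (1, x)) s := by
  obtain ⟨L₀, hL₀⟩ := hasLogOn_iff_exists_continuousMap.1 h₀
  let K : C(unitInterval × s, {z : ℂ // z ≠ 0}) :=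
    ⟨fun a ↦ ⟨H (a.1, a.2), hne a.1 a.2 a.2.2⟩,
      (hH.comp_continuous (by fun_prop) fun a ↦ ⟨mem_univ _, a.2.2⟩).subtype_mk _⟩
  have hK₀ (x : s) : K (0, x) = ⟨Complex.exp (L₀ x), Complex.exp_ne_zero _⟩ :=
    Subtype.ext (hL₀ x).symm
  let L := Complex.isCoveringMap_exp.liftHomotopy K L₀ hK₀
  refine hasLogOn_iff_exists_continuousMap.2
    ⟨L.comp ((ContinuousMap.const s 1).prodMk (.id s)), fun x ↦ ?_⟩
  exact congrArg Subtype.val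
    (congrFun (Complex.isCoveringMap_exp.liftHomotopy_lifts K L₀ hK₀) (1, x))

theorem sub_of_joinedIn {K : Set ℂ} {p q : ℂ} (hq : HasLogOn (fun z ↦ z - q) K)
    (h : JoinedIn Kᶜ q p) : HasLogOn (fun z ↦ z - p) K := by
  obtain ⟨η, hη⟩ := h
  have homotopy := of_homotopy (s := K) (H := fun a ↦ a.2 - η a.1)
    (Continuous.continuousOn (by fun_prop))
    (fun τ z hz hzero ↦ hη τ (sub_eq_zero.1 hzero ▸ hz)) (by simpa using hq)
  simpa using homotopy

end HasLogOn

theorem hasLogOn_of_convex {E : Type*} [NormedAddCommGroup E] [NormedSpace ℝ E] {f : E → ℂ}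
    {s : Set E} (hs : Convex ℝ s) (hso : IsOpen s) (hf : ContinuousOn f s)
    (hne : ∀ x ∈ s, f x ≠ 0) : HasLogOn f s := by
  rcases s.eq_empty_or_nonempty with rfl | hs₀
  · exact ⟨0, continuousOn_empty _, eqOn_empty _ _⟩
  have : ContractibleSpace s := hs.contractibleSpace hs₀
  have simplyConnected : IsSimplyConnected s := SimplyConnectedSpace.ofContractible s
  exact Complex.exists_continuousOn_eqOn_exp_comp simplyConnected hso hf
    fun ⟨x, hx, hfx⟩ ↦ hne x hx hfx

theorem hasLogOn_sub_of_norm_lt {K : Set ℂ} {q : ℂ} (hq : ∀ z ∈ K, ‖z‖ < ‖q‖) :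
    HasLogOn (fun z ↦ z - q) K := by
  have hball : HasLogOn (fun z ↦ z - q) (ball 0 ‖q‖) := by
    refine hasLogOn_of_convex (convex_ball 0 _) isOpen_ball (by fun_prop) fun z hz hzq ↦ ?_
    rw [sub_eq_zero.1 hzq, mem_ball_zero_iff] at hz
    exact hz.false
  exact hball.mono fun z hz ↦ mem_ball_zero_iff.2 (hq z hz)

theorem hasLogOn_sub_of_not_isBounded {K : Set ℂ} (hK : IsCompact K) {p : ℂ}
    (hp : ¬ IsBounded (connectedComponentIn Kᶜ p)) : HasLogOn (fun z ↦ z - p) K := by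
  have hpK : p ∈ Kᶜ := by
    by_contra hpK
    exact hp (connectedComponentIn_eq_empty hpK ▸ isBounded_empty)
  obtain ⟨R, hR⟩ := hK.isBounded.subset_ball 0
  obtain ⟨q, hq, hqR⟩ := not_subset.1 fun h ↦ hp (isBounded_ball.subset h)
  have joined : JoinedIn (connectedComponentIn Kᶜ p) q p :=
    (hK.isClosed.isOpen_compl.connectedComponentIn.isConnected_iff_isPathConnected.1
      (isConnected_connectedComponentIn_iff.2 hpK)).joinedIn q hq p (mem_connectedComponentIn hpK)
  rw [mem_ball_zero_iff, not_lt] at hqR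
  have hlog : HasLogOn (fun z ↦ z - q) K :=
    hasLogOn_sub_of_norm_lt fun z hz ↦ (mem_ball_zero_iff.1 (hR hz)).trans_le hqR
  exact hlog.sub_of_joinedIn (joined.mono (connectedComponentIn_subset _ _))

theorem eq_zero_of_hasLogOn_zpow_sphere {r : ℝ} (hr : 0 < r) {n : ℤ}
    (h : HasLogOn (fun w ↦ w ^ n) (sphere 0 r)) : n = 0 := by
  obtain ⟨L, hL, hLn⟩ := h
  have hmem (θ : ℝ) : circleMap 0 r θ ∈ sphere (0 : ℂ) r := circleMap_mem_sphere 0 hr.le θ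
  have exp_L (θ : ℝ) : Complex.exp (L (circleMap 0 r θ)) = circleMap 0 r θ ^ n := hLn (hmem θ)
  have exp_linear (θ : ℝ) : Complex.exp (L (circleMap 0 r θ)) =
      Complex.exp (L r + n * (θ * Complex.I)) := by
    have exp_L_zero : Complex.exp (L r) = (r : ℂ) ^ n := by simpa [circleMap] using exp_L 0
    rw [exp_L, Complex.exp_add, exp_L_zero, Complex.exp_int_mul, ← mul_zpow, circleMap_zero]
  have L_linear : (fun θ : ℝ ↦ L (circleMap 0 r θ)) = fun θ : ℝ ↦ L r + n * (θ * Complex.I) :=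
    Complex.isCoveringMap_exp.eq_of_comp_eq
      (hL.comp_continuous (continuous_circleMap 0 r) hmem) (by fun_prop)
      (funext fun θ ↦ Subtype.ext (exp_linear θ)) 0 (by simp [circleMap])
  have turn := congrFun L_linear (2 * Real.pi)
  simpa [circleMap, Real.pi_ne_zero] using turn

theorem continuousOn_comp_log {G : ℂ → Y} (hG : Continuous G)
    (hper : Function.Periodic G (2 * Real.pi * Complex.I)) :
    ContinuousOn (G ∘ Complex.log) {0}ᶜ := by
  have hexp := Complex.isCoveringMap_exp.isQuotientMap
    fun w ↦ ⟨Complex.log w, Subtype.ext (Complex.exp_log w.2)⟩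
  refine continuousOn_iff_continuous_domRestrict.2 (hexp.continuous_iff.2 (hG.congr fun ζ ↦ ?_))
  obtain ⟨k, hk⟩ := Complex.exp_eq_exp_iff_exists_int.1
    (Complex.exp_log (Complex.exp_ne_zero ζ))
  change G ζ = G (Complex.log (Complex.exp ζ))
  rw [hk]
  exact (hper.int_mul k ζ).symm

theorem exists_hasLogOn_div_zpow {f : ℂ → ℂ} (hf : ContinuousOn f {0}ᶜ)
    (hne : ∀ w ≠ 0, f w ≠ 0) : ∃ n : ℤ, HasLogOn (fun w ↦ f w / w ^ n) {0}ᶜ := by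
  obtain ⟨L, hL, hLf⟩ : HasLogOn (f ∘ Complex.exp) univ :=
    hasLogOn_of_convex convex_univ isOpen_univ
      (hf.comp_continuous Complex.continuous_exp Complex.exp_ne_zero).continuousOn
      fun ζ _ ↦ hne _ (Complex.exp_ne_zero ζ)
  rw [continuousOn_univ] at hL
  have exp_L (ζ : ℂ) : Complex.exp (L ζ) = f (Complex.exp ζ) := hLf (mem_univ ζ)
  have exp_L_add (ζ : ℂ) :
      Complex.exp (L (ζ + 2 * Real.pi * Complex.I)) = Complex.exp (L ζ) := by
    rw [exp_L, exp_L, Complex.exp_periodic]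
  obtain ⟨n, hn⟩ := Complex.exp_eq_exp_iff_exists_int.1 (exp_L_add 0)
  have L_add : (fun ζ ↦ L (ζ + 2 * Real.pi * Complex.I)) =
      fun ζ ↦ L ζ + n * (2 * Real.pi * Complex.I) := by
    refine Complex.isCoveringMap_exp.eq_of_comp_eq (by fun_prop) (by fun_prop)
      (funext fun ζ ↦ Subtype.ext ?_) 0 hn
    simp only [Function.comp_apply, exp_L_add, Complex.exp_add,
      Complex.exp_int_mul_two_pi_mul_I, mul_one]
  have periodic : Function.Periodic (fun ζ ↦ L ζ - n * ζ) (2 * Real.pi * Complex.I) := fun ζ ↦ by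
    linear_combination congrFun L_add ζ
  refine ⟨n, _, continuousOn_comp_log (by fun_prop) periodic, fun w hw ↦ ?_⟩
  simp only [Function.comp_apply, Complex.exp_sub, Complex.exp_int_mul, exp_L, Complex.exp_log hw]

theorem exists_retraction_annulus {E : Type*} [NormedAddCommGroup E] [NormedSpace ℝ E] {r R : ℝ}
    (hr : 0 < r) (hrR : r ≤ R) :
    ∃ φ : E → E, ContinuousOn φ {0}ᶜ ∧ MapsTo φ {0}ᶜ (closedBall 0 R \ ball 0 r) ∧
      EqOn φ id (closedBall 0 R \ ball 0 r) := by
  let φ : E → E := fun w ↦ (max r (min R ‖w‖) / ‖w‖) • w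
  have norm_φ {w : E} (hw : w ≠ 0) : ‖φ w‖ = max r (min R ‖w‖) := by
    rw [norm_smul, norm_div, norm_norm, div_mul_cancel₀ _ (norm_ne_zero_iff.2 hw),
      Real.norm_of_nonneg (hr.le.trans (le_max_left _ _))]
  refine ⟨φ, ?_, fun w hw ↦ ?_, fun w hw ↦ ?_⟩
  · exact ContinuousOn.smul (ContinuousOn.div (by fun_prop) (by fun_prop)
      fun w hw ↦ norm_ne_zero_iff.2 hw) continuousOn_id
  · rw [mem_sdiff, mem_closedBall_zero_iff, mem_ball_zero_iff, norm_φ hw, not_lt]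
    exact ⟨max_le hrR (min_le_left _ _), le_max_left _ _⟩
  · rw [mem_sdiff, mem_closedBall_zero_iff, mem_ball_zero_iff, not_lt] at hw
    simp only [φ, min_eq_right hw.1, max_eq_right hw.2, div_self (hr.trans_le hw.2).ne', one_smul,
      id]

theorem exists_hasLogOn_div_zpow_annulus {r R : ℝ} (hr : 0 < r) (hrR : r ≤ R) {f : ℂ → ℂ}
    (hf : ContinuousOn f (closedBall 0 R \ ball 0 r))
    (hne : ∀ w ∈ closedBall 0 R \ ball 0 r, f w ≠ 0) :
    ∃ n : ℤ, HasLogOn (fun w ↦ f w / w ^ n) (closedBall 0 R \ ball 0 r) := by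
  obtain ⟨φ, hφ, hmaps, hfix⟩ := exists_retraction_annulus (E := ℂ) hr hrR
  obtain ⟨n, hn⟩ := exists_hasLogOn_div_zpow (hf.comp hφ hmaps) fun w hw ↦ hne _ (hmaps hw)
  refine ⟨n, (hn.mono fun w hw hw₀ ↦ hw.2 (hw₀ ▸ mem_ball_self hr)).congr fun w hw ↦ ?_⟩
  simp only [Function.comp_apply, hfix hw, id]

theorem eq_zero_of_eqOn_zpow_compl {G : ℂ → ℂ} (hG : Continuous G) (hne : ∀ z, G z ≠ 0)
    {S : Set ℂ} (hS : IsBounded S) {p : ℂ} {m : ℤ} (h : EqOn G (fun z ↦ (z - p) ^ m) Sᶜ) :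
    m = 0 := by
  obtain ⟨R, hR, hSR⟩ := hS.subset_ball_lt 0 p
  have hlog : HasLogOn G univ :=
    hasLogOn_of_convex convex_univ isOpen_univ hG.continuousOn fun z _ ↦ hne z
  refine eq_zero_of_hasLogOn_zpow_sphere hR <|
    (hlog.comp (φ := fun w ↦ p + w) (by fun_prop) (mapsTo_univ _ _)).congr fun w hw ↦ ?_
  have hwS : p + w ∉ S := fun hwS ↦ by
    have := hSR hwS
    rw [mem_ball, dist_self_add_left, mem_sphere_zero_iff_norm.1 hw] at this
    exact this.false
  simpa using h hwS

theorem eq_zero_of_hasLogOn_zpow_mul {U : Set ℂ} (hU : IsOpen U) (hUb : IsBounded U) {p : ℂ}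
    (hp : p ∈ U) {f : ℂ → ℂ} (hf : ContinuousOn f (closure U)) (hne : ∀ z ∈ closure U, f z ≠ 0)
    {m : ℤ} (h : HasLogOn (fun z ↦ (z - p) ^ m * f z) (frontier U)) : m = 0 := by
  classical
  obtain ⟨L, hL⟩ := hasLogOn_iff_exists_continuousMap.1 h
  obtain ⟨M, hM⟩ := ContinuousMap.exists_restrict_eq isClosed_frontier L
  have glue : ∀ z ∈ frontier U, Complex.exp (M z) / f z = (z - p) ^ m := fun z hz ↦ by
    rw [div_eq_iff (hne z (frontier_subset_closure hz)), ← hL ⟨z, hz⟩, ← hM]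
    rfl
  have sub_ne_zero_of_notMem {z : ℂ} (hz : z ∉ U) : z - p ≠ 0 := fun hzp ↦
    hz (sub_eq_zero.1 hzp ▸ hp)
  let G : ℂ → ℂ := U.piecewise (fun z ↦ Complex.exp (M z) / f z) fun z ↦ (z - p) ^ m
  refine eq_zero_of_eqOn_zpow_compl (G := G) ?_ (fun z ↦ ?_) hUb (piecewise_eqOn_compl _ _ _)
  · refine continuous_piecewise glue (ContinuousOn.div (by fun_prop) hf hne) ?_
    rw [hU.isClosed_compl.closure_eq]
    exact ContinuousOn.zpow₀ (by fun_prop) m fun z hz ↦ Or.inl (sub_ne_zero_of_notMem hz)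
  · by_cases hz : z ∈ U
    · simpa only [G, piecewise_eq_of_mem _ _ _ hz] using
        div_ne_zero (Complex.exp_ne_zero _) (hne z (subset_closure hz))
    · simpa only [G, piecewise_eq_of_notMem _ _ _ hz] using
        zpow_ne_zero m (sub_ne_zero_of_notMem hz)

end Logarithm

/-! ### Holes -/

section Hole

variable {X : Type*} [TopologicalSpace X] [Bornology X] {K C U V T S : Set X} {p q : X}

/-- The set `U` is a hole of `K`, that is, a bounded connected component of its complement. -/
def IsHole (K U : Set X) : Prop :=
  (∃ p ∈ Kᶜ, U = connectedComponentIn Kᶜ p) ∧ IsBounded U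

theorem isHole_connectedComponentIn (hp : p ∉ K) (hb : IsBounded (connectedComponentIn Kᶜ p)) :
    IsHole K (connectedComponentIn Kᶜ p) :=
  ⟨⟨p, hp, rfl⟩, hb⟩

namespace IsHole

theorem nonempty (hU : IsHole K U) : U.Nonempty := by
  obtain ⟨⟨p, hp, rfl⟩, -⟩ := hU
  exact ⟨p, mem_connectedComponentIn hp⟩

theorem subset_compl (hU : IsHole K U) : U ⊆ Kᶜ := by
  obtain ⟨⟨p, -, rfl⟩, -⟩ := hU
  exact connectedComponentIn_subset _ _

theorem eq_connectedComponentIn (hU : IsHole K U) (hp : p ∈ U) :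
    U = connectedComponentIn Kᶜ p := by
  obtain ⟨⟨q, -, rfl⟩, -⟩ := hU
  exact connectedComponentIn_eq hp

theorem subset_of_isPreconnected (hU : IsHole K U) (hS : IsPreconnected S) (hSK : Disjoint S K)
    (hSU : (S ∩ U).Nonempty) : S ⊆ U := by
  obtain ⟨p, hpS, hpU⟩ := hSU
  rw [hU.eq_connectedComponentIn hpU]
  exact hS.subset_connectedComponentIn hpS hSK.subset_compl_right

theorem subset_union_of_unique (hT : IsHole C T) (hCK : C ⊆ K)
    (hunique : ∀ V, IsHole K V → V = U) : T ⊆ K ∪ U := by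
  refine fun q hqT ↦ or_iff_not_imp_left.2 fun hqK ↦ ?_
  have component_subset : connectedComponentIn Kᶜ q ⊆ T := by
    rw [hT.eq_connectedComponentIn hqT]
    exact connectedComponentIn_mono q (compl_subset_compl.2 hCK)
  rw [← hunique _ (isHole_connectedComponentIn hqK (hT.2.subset component_subset))]
  exact mem_connectedComponentIn hqK

variable [LocallyConnectedSpace X]

theorem isOpen (hU : IsHole K U) (hK : IsClosed K) : IsOpen U := by
  obtain ⟨⟨p, -, rfl⟩, -⟩ := hU
  exact hK.isOpen_compl.connectedComponentIn

theorem closure_subset (hU : IsHole K U) (hK : IsClosed K) : closure U ⊆ K ∪ U := by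
  refine fun z hz ↦ or_iff_not_imp_left.2 fun hzK ↦ ?_
  obtain ⟨q, hqz, hqU⟩ := mem_closure_iff.1 hz _ hK.isOpen_compl.connectedComponentIn
    (mem_connectedComponentIn hzK)
  rw [hU.eq_connectedComponentIn hqU, ← connectedComponentIn_eq hqz]
  exact mem_connectedComponentIn hzK

theorem frontier_subset (hU : IsHole K U) (hK : IsClosed K) : frontier U ⊆ K := by
  rw [(hU.isOpen hK).frontier_eq]
  exact fun z hz ↦ (hU.closure_subset hK hz.1).resolve_right hz.2

theorem isClosed_union (hU : IsHole K U) (hK : IsClosed K) : IsClosed (K ∪ U) := by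
  refine isClosed_of_closure_subset ?_
  rw [closure_union, hK.closure_eq]
  exact union_subset subset_union_left (hU.closure_subset hK)

theorem frontier_subset_or_frontier_union_subset (hU : IsHole K U) (hK : IsClosed K)
    (hunique : ∀ V, IsHole K V → V = U) (hC : IsClosed C) (hCK : C ⊆ K)
    (hKC : IsPreconnected (K \ C)) (hT : IsHole C T) (hUT : U ⊆ T) :
    frontier U ⊆ C ∨ frontier (K ∪ U) ⊆ C := by
  rcases (K \ C ∩ T).eq_empty_or_nonempty with hdisj | hmeet
  · refine Or.inl fun x hx ↦ ?_
    by_contra hxC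
    have hxT : x ∈ T := (hT.closure_subset hC (closure_mono hUT hx.1)).resolve_left hxC
    exact hdisj.subset ⟨⟨hU.frontier_subset hK hx, hxC⟩, hxT⟩
  · have hKT : K \ C ⊆ T := hT.subset_of_isPreconnected hKC disjoint_sdiff_left hmeet
    refine Or.inr fun y hy ↦ ?_
    by_contra hyC
    have hyT : y ∈ T := ((hU.isClosed_union hK).frontier_subset hy).elim
      (fun hyK ↦ hKT ⟨hyK, hyC⟩) (fun hyU ↦ hUT hyU)
    exact hy.2 (interior_maximal (hT.subset_union_of_unique hCK hunique) (hT.isOpen hC) hyT)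

end IsHole

end Hole

theorem frontier_nonempty_of_isBounded {E : Type*} [NormedAddCommGroup E] [NormedSpace ℝ E]
    [Nontrivial E] {S : Set E} (hS : S.Nonempty) (hb : IsBounded S) : (frontier S).Nonempty :=
  nonempty_frontier_iff.2
    ⟨hS, fun huniv ↦ NormedSpace.unbounded_univ ℝ E (huniv ▸ hb)⟩

/-! ### The hole of an annulus -/

section Annulus

/-- The round annulus on which closed topological annuli are parametrized. -/
abbrev roundAnnulus : Set ℂ := closedBall 0 2 \ ball 0 1

variable {α : ℂ → ℂ} {U V : Set ℂ} {p : ℂ} {r : ℝ}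

theorem mem_roundAnnulus {w : ℂ} : w ∈ roundAnnulus ↔ ‖w‖ ∈ Icc 1 2 := by
  simp only [mem_sdiff, mem_closedBall_zero_iff, mem_ball_zero_iff, not_lt, mem_Icc, and_comm]

theorem ne_zero_of_mem_roundAnnulus {w : ℂ} (hw : w ∈ roundAnnulus) : w ≠ 0 :=
  norm_pos_iff.1 (one_pos.trans_le (mem_roundAnnulus.1 hw).1)

theorem sphere_subset_roundAnnulus (hr : r ∈ Icc 1 2) : sphere 0 r ⊆ roundAnnulus :=
  fun _ hw ↦ mem_roundAnnulus.2 (mem_sphere_zero_iff_norm.1 hw ▸ hr)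

theorem isCompact_roundAnnulus : IsCompact roundAnnulus :=
  (isCompact_closedBall 0 2).diff isOpen_ball

theorem isPreconnected_norm_preimage {I : Set ℝ} (hI : IsPreconnected I) :
    IsPreconnected {w : ℂ | ‖w‖ ∈ I} := by
  have polar : {w : ℂ | ‖w‖ ∈ I} =
      (fun a : ℝ × ℝ ↦ (a.1 : ℂ) * Complex.exp (a.2 * Complex.I)) '' ((I ∩ Ici 0) ×ˢ univ) := by
    ext w
    constructor
    · exact fun hw ↦ ⟨(‖w‖, w.arg), ⟨⟨hw, norm_nonneg w⟩, mem_univ _⟩,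
        Complex.norm_mul_exp_arg_mul_I w⟩
    · rintro ⟨⟨r, θ⟩, ⟨⟨hr, hr₀⟩, -⟩, rfl⟩
      simpa [Complex.norm_exp_ofReal_mul_I, abs_of_nonneg (mem_Ici.1 hr₀)] using hr
  rw [polar]
  exact ((hI.ordConnected.inter ordConnected_Ici).isPreconnected.prod isPreconnected_univ).image _
    (by fun_prop)

theorem isPreconnected_roundAnnulus_diff_sphere_one :
    IsPreconnected (roundAnnulus \ sphere 0 1) := by
  convert isPreconnected_norm_preimage (isPreconnected_Ioc (a := (1 : ℝ)) (b := 2)) using 1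
  ext w
  rw [mem_sdiff, mem_roundAnnulus, mem_sphere_zero_iff_norm, mem_ofPred_eq, mem_Icc, mem_Ioc]
  grind

theorem isPreconnected_roundAnnulus_diff_sphere_two :
    IsPreconnected (roundAnnulus \ sphere 0 2) := by
  convert isPreconnected_norm_preimage (isPreconnected_Ico (a := (1 : ℝ)) (b := 2)) using 1
  ext w
  rw [mem_sdiff, mem_roundAnnulus, mem_sphere_zero_iff_norm, mem_ofPred_eq, mem_Icc, mem_Ico]
  grind

theorem isCompact_annCarrier (hc : ContinuousOn α roundAnnulus) : IsCompact (annCarrier α) :=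
  isCompact_roundAnnulus.image_of_continuousOn hc

theorem isCompact_image_sphere (hc : ContinuousOn α roundAnnulus) (hr : r ∈ Icc 1 2) :
    IsCompact (α '' sphere 0 r) :=
  (isCompact_sphere 0 r).image_of_continuousOn (hc.mono (sphere_subset_roundAnnulus hr))

theorem disjoint_image_sphere (hi : InjOn α roundAnnulus) :
    Disjoint (α '' sphere 0 1) (α '' sphere 0 2) := by
  rw [disjoint_left]
  rintro _ ⟨w₁, hw₁, rfl⟩ ⟨w₂, hw₂, heq⟩
  have hw : w₂ = w₁ := hi (sphere_subset_roundAnnulus ⟨one_le_two, le_rfl⟩ hw₂)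
    (sphere_subset_roundAnnulus ⟨le_rfl, one_le_two⟩ hw₁) heq
  rw [mem_sphere_zero_iff_norm] at hw₁ hw₂
  rw [hw] at hw₂
  linarith

theorem exists_hasLogOn_sub_div_zpow (hc : ContinuousOn α roundAnnulus) (hp : p ∉ annCarrier α) :
    ∃ n : ℤ, HasLogOn (fun w ↦ (α w - p) / w ^ n) roundAnnulus :=
  exists_hasLogOn_div_zpow_annulus one_pos one_le_two (hc.sub continuousOn_const)
    fun w hw hzero ↦ hp ⟨w, hw, sub_eq_zero.1 hzero⟩

namespace IsHole

theorem winding_ne_zero (hc : ContinuousOn α roundAnnulus) (hi : InjOn α roundAnnulus)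
    (hU : IsHole (annCarrier α) U) (hp : p ∈ U) {n : ℤ}
    (hn : HasLogOn (fun w ↦ (α w - p) / w ^ n) roundAnnulus) : n ≠ 0 := by
  rintro rfl
  have hA : IsClosed (annCarrier α) := (isCompact_annCarrier hc).isClosed
  have hlog : HasLogOn (fun z ↦ z - p) (annCarrier α) :=
    HasLogOn.image (hn.congr fun w _ ↦ by simp) isCompact_roundAnnulus hc hi
  refine one_ne_zero <| eq_zero_of_hasLogOn_zpow_mul (m := 1) (f := 1) (hU.isOpen hA) hU.2 hp
    continuousOn_const (fun _ _ ↦ one_ne_zero) ?_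
  simpa using hlog.mono (hU.frontier_subset hA)

theorem annCarrier_unique (hc : ContinuousOn α roundAnnulus) (hi : InjOn α roundAnnulus)
    (hU : IsHole (annCarrier α) U) (hV : IsHole (annCarrier α) V) : V = U := by
  have hA : IsClosed (annCarrier α) := (isCompact_annCarrier hc).isClosed
  obtain ⟨p, hp⟩ := hU.nonempty
  obtain ⟨q, hq⟩ := hV.nonempty
  obtain ⟨n, hn⟩ := exists_hasLogOn_sub_div_zpow hc (hU.subset_compl hp)
  obtain ⟨m, hm⟩ := exists_hasLogOn_sub_div_zpow hc (hV.subset_compl hq)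
  by_contra hVU
  have hne : ∀ z ∈ closure U, z - q ≠ 0 := fun z hz hzq ↦ by
    rw [sub_eq_zero] at hzq
    subst hzq
    have hzU : z ∈ U := (hU.closure_subset hA hz).resolve_left (hV.subset_compl hq)
    exact hVU ((hV.eq_connectedComponentIn hq).trans (hU.eq_connectedComponentIn hzU).symm)
  -- The powers `m` and `-n` cancel the windings `n` and `m` of the two factors.
  have hlog : HasLogOn (fun z ↦ (z - p) ^ m * (z - q) ^ (-n)) (annCarrier α) := by
    refine HasLogOn.image (((hn.zpow m).mul (hm.zpow (-n))).congr fun w hw ↦ ?_)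
      isCompact_roundAnnulus hc hi
    have hw₀ : w ≠ 0 := ne_zero_of_mem_roundAnnulus hw
    simp only [Function.comp_apply, div_zpow, zpow_neg, ← zpow_mul, mul_comm n m]
    field_simp
  exact hV.winding_ne_zero hc hi hq hm <| eq_zero_of_hasLogOn_zpow_mul (hU.isOpen hA) hU.2 hp
    (ContinuousOn.zpow₀ (by fun_prop) _ fun z hz ↦ Or.inl (hne z hz))
    (fun z hz ↦ zpow_ne_zero _ (hne z hz)) (hlog.mono (hU.frontier_subset hA))

theorem exists_isHole_image_sphere (hc : ContinuousOn α roundAnnulus) (hi : InjOn α roundAnnulus)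
    (hU : IsHole (annCarrier α) U) (hr : r ∈ Icc 1 2) :
    ∃ T, IsHole (α '' sphere 0 r) T ∧ U ⊆ T := by
  have hsub : sphere 0 r ⊆ roundAnnulus := sphere_subset_roundAnnulus hr
  have compl_subset : (annCarrier α)ᶜ ⊆ (α '' sphere 0 r)ᶜ :=
    compl_subset_compl.2 (image_mono hsub)
  obtain ⟨p, hp⟩ := hU.nonempty
  refine ⟨connectedComponentIn (α '' sphere 0 r)ᶜ p,
    isHole_connectedComponentIn (compl_subset (hU.subset_compl hp)) ?_,
    hU.eq_connectedComponentIn hp ▸ connectedComponentIn_mono p compl_subset⟩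
  by_contra hunbounded
  obtain ⟨n, hn⟩ := exists_hasLogOn_sub_div_zpow hc (hU.subset_compl hp)
  have hlog : HasLogOn (fun w ↦ α w - p) (sphere 0 r) :=
    (hasLogOn_sub_of_not_isBounded (isCompact_image_sphere hc hr) hunbounded).comp
      (hc.mono hsub) (mapsTo_image α _)
  refine hU.winding_ne_zero hc hi hp hn <| eq_zero_of_hasLogOn_zpow_sphere
    (one_pos.trans_le hr.1) ((hlog.mul ((hn.mono hsub).zpow (-1))).congr fun w hw ↦ ?_)
  have hαw : α w - p ≠ 0 := hlog.ne_zero hw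
  simp only [zpow_neg_one, inv_div]
  field_simp

theorem frontier_subset_or_of_isPreconnected_diff (hc : ContinuousOn α roundAnnulus)
    (hi : InjOn α roundAnnulus) (hU : IsHole (annCarrier α) U) (hr : r ∈ Icc 1 2)
    (hconn : IsPreconnected (roundAnnulus \ sphere 0 r)) :
    frontier U ⊆ α '' sphere 0 r ∨ frontier (annCarrier α ∪ U) ⊆ α '' sphere 0 r := by
  have hsub : sphere 0 r ⊆ roundAnnulus := sphere_subset_roundAnnulus hr
  obtain ⟨T, hT, hUT⟩ := hU.exists_isHole_image_sphere hc hi hr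
  have hdiff : IsPreconnected (annCarrier α \ α '' sphere 0 r) := by
    rw [annCarrier, ← hi.image_sdiff_subset hsub]
    exact hconn.image α (hc.mono sdiff_subset)
  exact hU.frontier_subset_or_frontier_union_subset (isCompact_annCarrier hc).isClosed
    (fun V hV ↦ hU.annCarrier_unique hc hi hV) (isCompact_image_sphere hc hr).isClosed
    (image_mono hsub) hdiff hT hUT

theorem frontiers_subset_image_sphere (hc : ContinuousOn α roundAnnulus)
    (hi : InjOn α roundAnnulus) (hU : IsHole (annCarrier α) U) :
    (frontier U ⊆ α '' sphere 0 1 ∧ frontier (annCarrier α ∪ U) ⊆ α '' sphere 0 2) ∨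
      (frontier U ⊆ α '' sphere 0 2 ∧ frontier (annCarrier α ∪ U) ⊆ α '' sphere 0 1) := by
  have not_both {S : Set ℂ} (hS : S.Nonempty) (hb : IsBounded S)
      (h₁ : frontier S ⊆ α '' sphere 0 1) : ¬ frontier S ⊆ α '' sphere 0 2 := fun h₂ ↦
    let ⟨_, hz⟩ := frontier_nonempty_of_isBounded hS hb
    disjoint_left.1 (disjoint_image_sphere hi) (h₁ hz) (h₂ hz)
  have not_both_U := not_both hU.nonempty hU.2
  have not_both_union := not_both (hU.nonempty.mono subset_union_right)
    ((isCompact_annCarrier hc).isBounded.union hU.2)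
  have sphere_one := hU.frontier_subset_or_of_isPreconnected_diff hc hi ⟨le_rfl, one_le_two⟩
    isPreconnected_roundAnnulus_diff_sphere_one
  have sphere_two := hU.frontier_subset_or_of_isPreconnected_diff hc hi ⟨one_le_two, le_rfl⟩
    isPreconnected_roundAnnulus_diff_sphere_two
  tauto

end IsHole

end Annulus

/-! ### Curves and extremal width -/

section Curve

/-- The length `∫ ρ |dγ|` of the curve `γ` in the metric `ρ`. -/
def curveLength (ρ : ℂ → ℝ≥0∞) (γ : ℝ → ℂ) : ℝ≥0∞ :=
  ∫⁻ t in Ioo (0 : ℝ) 1, ρ (γ t) * (‖deriv γ t‖₊ : ℝ≥0∞)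

/-- The family `F` overflows the family `G`: each curve of `F` is, in every metric, at least as long
as some curve of `G`, as happens when it has a subcurve in `G`. -/
def Overflows (F G : Set (ℝ → ℂ)) : Prop :=
  ∀ γ ∈ F, ∃ δ ∈ G, ∀ ρ, curveLength ρ δ ≤ curveLength ρ γ

variable {F G F₁ F₂ : Set (ℝ → ℂ)} {ρ σ : ℂ → ℝ≥0∞} {γ : ℝ → ℂ} {a b : ℝ}

theorem curveLength_mono (h : ∀ z, ρ z ≤ σ z) (γ : ℝ → ℂ) : curveLength ρ γ ≤ curveLength σ γ :=
  lintegral_mono fun t ↦ mul_le_mul_left (h (γ t)) _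

theorem extremalWidth_le (hρ : Measurable ρ) (h : ∀ γ ∈ F, 1 ≤ curveLength ρ γ) :
    extremalWidth F ≤ ∫⁻ z, ρ z ^ 2 :=
  iInf₂_le ρ ⟨hρ, h⟩

theorem Overflows.extremalWidth_le (h : Overflows F G) : extremalWidth F ≤ extremalWidth G := by
  refine le_iInf₂ fun ρ hρ ↦ _root_.extremalWidth_le hρ.1 fun γ hγ ↦ ?_
  obtain ⟨δ, hδ, hle⟩ := h γ hγ
  exact (hρ.2 δ hδ).trans (hle ρ)

theorem extremalWidth_union_le :
    extremalWidth (F₁ ∪ F₂) ≤ extremalWidth F₁ + extremalWidth F₂ := by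
  refine ENNReal.le_iInf₂_add_iInf₂ fun ρ hρ σ hσ ↦ ?_
  calc extremalWidth (F₁ ∪ F₂)
      ≤ ∫⁻ z, max (ρ z) (σ z) ^ 2 := by
        refine extremalWidth_le (hρ.1.max hσ.1) ?_
        rintro γ (hγ | hγ)
        · exact (hρ.2 γ hγ).trans (curveLength_mono (fun z ↦ le_max_left _ _) γ)
        · exact (hσ.2 γ hγ).trans (curveLength_mono (fun z ↦ le_max_right _ _) γ)
    _ ≤ ∫⁻ z, ρ z ^ 2 + σ z ^ 2 := by
        refine lintegral_mono fun z ↦ ?_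
        rcases max_choice (ρ z) (σ z) with hmax | hmax <;> rw [hmax]
        · exact le_self_add
        · exact le_add_self
    _ = (∫⁻ z, ρ z ^ 2) + ∫⁻ z, σ z ^ 2 := lintegral_add_left (hρ.1.pow_const 2) _

theorem lineMap_mem_Ioo {t : ℝ} (ha : a ∈ Icc 0 1) (hb : b ∈ Icc 0 1) (hab : a ≠ b)
    (ht : t ∈ Ioo 0 1) : AffineMap.lineMap a b t ∈ Ioo (0 : ℝ) 1 := by
  have hmem : AffineMap.lineMap a b t ∈ openSegment ℝ a b :=
    openSegment_eq_image_lineMap ℝ a b ▸ mem_image_of_mem _ ht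
  have hopen : openSegment ℝ a b ⊆ interior (Icc 0 1) := by
    rw [openSegment_eq_Ioo' hab, interior_Icc]
    exact Ioo_subset_Ioo (le_min ha.1 hb.1) (max_le ha.2 hb.2)
  exact interior_Icc (α := ℝ) ▸ hopen hmem

theorem lineMap_mem_Icc {t : ℝ} (ha : a ∈ Icc 0 1) (hb : b ∈ Icc 0 1) (ht : t ∈ Icc 0 1) :
    AffineMap.lineMap a b t ∈ Icc (0 : ℝ) 1 :=
  (convex_Icc 0 1).lineMap_mem ha hb ht

theorem IsCurve.comp_lineMap (hγ : IsCurve γ) (ha : a ∈ Icc 0 1) (hb : b ∈ Icc 0 1)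
    (hab : a ≠ b) : IsCurve (γ ∘ AffineMap.lineMap a b) :=
  ⟨hγ.1.comp (AffineMap.lineMap_continuous).continuousOn fun _ ↦ lineMap_mem_Icc ha hb,
    hγ.2.comp (AffineMap.contDiff_lineMap a b).contDiffOn fun _ ↦ lineMap_mem_Ioo ha hb hab⟩

theorem IsCurve.curveLength_comp_lineMap_le (hγ : IsCurve γ) (ha : a ∈ Icc 0 1)
    (hb : b ∈ Icc 0 1) (hab : a ≠ b) (ρ : ℂ → ℝ≥0∞) :
    curveLength ρ (γ ∘ AffineMap.lineMap a b) ≤ curveLength ρ γ := by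
  set l : ℝ → ℝ := ⇑(AffineMap.lineMap a b : ℝ →ᵃ[ℝ] ℝ)
  have hl {t : ℝ} (ht : t ∈ Ioo (0 : ℝ) 1) : l t ∈ Ioo 0 1 := lineMap_mem_Ioo ha hb hab ht
  have nnnorm_deriv {t : ℝ} (ht : t ∈ Ioo (0 : ℝ) 1) :
      (‖deriv (γ ∘ l) t‖₊ : ℝ≥0∞) = ENNReal.ofReal |b - a| * ‖deriv γ (l t)‖₊ := by
    have hdiff : DifferentiableAt ℝ γ (l t) :=
      (hγ.2.contDiffAt (isOpen_Ioo.mem_nhds (hl ht))).differentiableAt one_ne_zero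
    rw [(hdiff.hasDerivAt.scomp t AffineMap.hasDerivAt_lineMap).deriv, nnnorm_smul,
      ENNReal.coe_mul, ← Real.norm_eq_abs, ofReal_norm, enorm_eq_nnnorm]
  calc curveLength ρ (γ ∘ l)
      = ∫⁻ t in Ioo (0 : ℝ) 1, ENNReal.ofReal |b - a| * (ρ (γ (l t)) * ‖deriv γ (l t)‖₊) := by
        refine setLIntegral_congr_fun measurableSet_Ioo fun t ht ↦ ?_
        simp only [nnnorm_deriv ht, Function.comp_apply, mul_left_comm]
    _ = ∫⁻ t in l '' Ioo (0 : ℝ) 1, ρ (γ t) * ‖deriv γ t‖₊ :=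
        (lintegral_image_eq_lintegral_abs_deriv_mul measurableSet_Ioo
          (fun t _ ↦ AffineMap.hasDerivAt_lineMap.hasDerivWithinAt)
          (AffineMap.lineMap_injective ℝ hab).injOn fun t ↦ ρ (γ t) * ‖deriv γ t‖₊).symm
    _ ≤ curveLength ρ γ := lintegral_mono_set (image_subset_iff.2 fun _ ↦ hl)

theorem exists_mem_frontier_union {X : Type*} [TopologicalSpace X] {γ : ℝ → X} {K U : Set X}
    (hγ : ContinuousOn γ (Icc 0 1)) (hK : IsClosed K) (h₀ : γ 0 ∈ K)
    (hU : ∀ t ∈ Icc 0 1, γ t ∉ U) (h₁ : γ 1 ∉ interior (K ∪ U)) :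
    ∃ s ∈ Icc (0 : ℝ) 1, (∀ t ∈ Icc 0 s, γ t ∈ K) ∧ γ s ∈ frontier (K ∪ U) := by
  have compact : IsCompact (Icc (0 : ℝ) 1 ∩ γ ⁻¹' (interior (K ∪ U))ᶜ) :=
    isCompact_Icc.of_isClosed_subset
      (hγ.preimage_isClosed_of_isClosed isClosed_Icc isOpen_interior.isClosed_compl)
      inter_subset_left
  obtain ⟨s, ⟨hs, hsout⟩, hmin⟩ := compact.exists_isLeast ⟨1, right_mem_Icc.2 zero_le_one, h₁⟩
  have hIcc : Icc 0 s ⊆ Icc 0 1 := Icc_subset_Icc_right hs.2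
  have mem_before : MapsTo γ (Ico 0 s) K := fun t ht ↦ by
    have htI : t ∈ Icc (0 : ℝ) 1 := hIcc (Ico_subset_Icc_self ht)
    have hint : γ t ∈ interior (K ∪ U) := by
      by_contra hout
      exact ht.2.not_ge (hmin ⟨htI, hout⟩)
    exact (interior_subset hint).resolve_right (hU t htI)
  have mem_upto : ∀ t ∈ Icc 0 s, γ t ∈ K := by
    rcases hs.1.eq_or_lt with rfl | hs₀
    · rintro t ht
      rwa [le_antisymm ht.2 ht.1]
    · have hclosure := mem_before.closure_of_continuousOn
        (by rw [closure_Ico hs₀.ne]; exact hγ.mono hIcc)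
      rwa [closure_Ico hs₀.ne, hK.closure_eq] at hclosure
  exact ⟨s, hs, mem_upto, subset_closure (Or.inl (mem_upto s (right_mem_Icc.2 hs.1))), hsout⟩

theorem IsCurve.exists_mem_curveFamily_of_mapsTo (hγ : IsCurve γ) {S P Q : Set ℂ}
    (hPQ : Disjoint P Q) {s : ℝ} (hs : s ∈ Icc 0 1) (hS : ∀ t ∈ Icc 0 s, γ t ∈ S)
    (hends : γ 0 ∈ P ∧ γ s ∈ Q ∨ γ 0 ∈ Q ∧ γ s ∈ P) :
    ∃ δ ∈ curveFamily S P Q, ∀ ρ, curveLength ρ δ ≤ curveLength ρ γ := by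
  have hs₀ : s ≠ 0 := by
    rintro rfl
    exact hends.elim (fun h ↦ disjoint_left.1 hPQ h.1 h.2) fun h ↦ disjoint_left.1 hPQ h.2 h.1
  have h0 : (0 : ℝ) ∈ Icc (0 : ℝ) s := left_mem_Icc.2 hs.1
  have h1 : s ∈ Icc (0 : ℝ) s := right_mem_Icc.2 hs.1
  have hIcc : Icc 0 s ⊆ Icc 0 1 := Icc_subset_Icc_right hs.2
  have subcurve {a b : ℝ} (ha : a ∈ Icc 0 s) (hb : b ∈ Icc 0 s) (hab : a ≠ b) (haP : γ a ∈ P)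
      (hbQ : γ b ∈ Q) : ∃ δ ∈ curveFamily S P Q, ∀ ρ, curveLength ρ δ ≤ curveLength ρ γ := by
    refine ⟨γ ∘ AffineMap.lineMap a b, ⟨hγ.comp_lineMap (hIcc ha) (hIcc hb) hab,
      fun t ht ↦ hS _ ((convex_Icc 0 s).lineMap_mem ha hb ht), ?_, ?_⟩,
      hγ.curveLength_comp_lineMap_le (hIcc ha) (hIcc hb) hab⟩
    · simpa using haP
    · simpa using hbQ
  rcases hends with ⟨hP, hQ⟩ | ⟨hQ, hP⟩
  · exact subcurve h0 h1 hs₀.symm hP hQ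
  · exact subcurve h1 h0 hs₀ hP hQ

end Curve

/-! ### Crossing the annuli -/

section Crossing

variable {α β : ℂ → ℂ} {U V : Set ℂ}

/-- The curves crossing the closed topological annulus parametrized by `α`, from its first to its
second boundary circle. -/
def crossingFamily (α : ℂ → ℂ) : Set (ℝ → ℂ) :=
  curveFamily (annCarrier α) (α '' sphere 0 1) (α '' sphere 0 2)

theorem IsHole.exists_mem_crossingFamily (hc : ContinuousOn α roundAnnulus)
    (hi : InjOn α roundAnnulus) (hU : IsHole (annCarrier α) U) {γ : ℝ → ℂ} (hγ : IsCurve γ)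
    (h₀ : γ 0 ∈ frontier U) (hγU : ∀ t ∈ Icc 0 1, γ t ∉ U)
    (h₁ : γ 1 ∉ interior (annCarrier α ∪ U)) :
    ∃ δ ∈ crossingFamily α, ∀ ρ, curveLength ρ δ ≤ curveLength ρ γ := by
  have hA : IsClosed (annCarrier α) := (isCompact_annCarrier hc).isClosed
  obtain ⟨s, hs, hsA, hsF⟩ := exists_mem_frontier_union hγ.1 hA (hU.frontier_subset hA h₀) hγU h₁
  exact hγ.exists_mem_curveFamily_of_mapsTo (disjoint_image_sphere hi) hs hsA
    ((hU.frontiers_subset_image_sphere hc hi).imp (And.imp (· h₀) (· hsF))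
      (And.imp (· h₀) (· hsF)))

theorem overflows_crossingFamily_union (hAc : ContinuousOn α roundAnnulus)
    (hAi : InjOn α roundAnnulus) (hBc : ContinuousOn β roundAnnulus) (hBi : InjOn β roundAnnulus)
    (hU : IsHole (annCarrier α) U) (hV : IsHole (annCarrier β) V) :
    Overflows (curveFamily ((annCarrier α ∪ U ∪ annCarrier β ∪ V) \ (U ∪ V)) (frontier (U ∪ V))
        (frontier (annCarrier α ∪ U ∪ annCarrier β ∪ V)))
      (crossingFamily α ∪ crossingFamily β) := by
  rintro γ ⟨hγ, hS, h₀, h₁⟩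
  rcases frontier_union_subset U V h₀ with ⟨h₀U, -⟩ | ⟨-, h₀V⟩
  · obtain ⟨δ, hδ, hle⟩ := hU.exists_mem_crossingFamily hAc hAi hγ h₀U
      (fun t ht htU ↦ (hS t ht).2 (Or.inl htU))
      fun hint ↦ h₁.2 (interior_mono (by grind) hint)
    exact ⟨δ, Or.inl hδ, hle⟩
  · obtain ⟨δ, hδ, hle⟩ := hV.exists_mem_crossingFamily hBc hBi hγ h₀V
      (fun t ht htV ↦ (hS t ht).2 (Or.inr htV))
      fun hint ↦ h₁.2 (interior_mono (by grind) hint)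
    exact ⟨δ, Or.inr hδ, hle⟩

theorem enclosed_annuli_general (hAc : ContinuousOn α roundAnnulus) (hAi : InjOn α roundAnnulus)
    (hBc : ContinuousOn β roundAnnulus) (hBi : InjOn β roundAnnulus)
    (hU : IsHole (annCarrier α) U) (hV : IsHole (annCarrier β) V) :
    widthIn ((annCarrier α ∪ U ∪ annCarrier β ∪ V) \ (U ∪ V)) (frontier (U ∪ V))
        (frontier (annCarrier α ∪ U ∪ annCarrier β ∪ V)) ≤
      (annModulus α)⁻¹ + (annModulus β)⁻¹ := by
  simp only [annModulus, inv_inv]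
  exact (overflows_crossingFamily_union hAc hAi hBc hBi hU hV).extremalWidth_le.trans
    extremalWidth_union_le

end Crossing

theorem inv_add_inv_le_ofReal_one_div {ε : ℝ} (hε : 0 < ε) {a b : ℝ≥0∞}
    (ha : ENNReal.ofReal (2 * ε) ≤ a) (hb : ENNReal.ofReal (2 * ε) ≤ b) :
    a⁻¹ + b⁻¹ ≤ ENNReal.ofReal (1 / ε) := by
  calc a⁻¹ + b⁻¹
      ≤ (ENNReal.ofReal (2 * ε))⁻¹ + (ENNReal.ofReal (2 * ε))⁻¹ := by gcongr
    _ = ENNReal.ofReal ((2 * ε)⁻¹ + (2 * ε)⁻¹) := by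
        rw [← ENNReal.ofReal_inv_of_pos (by positivity),
          ENNReal.ofReal_add (by positivity) (by positivity)]
    _ = ENNReal.ofReal (1 / ε) := by
        congr 1
        field_simp
        norm_num

/-- **Enclosed annuli.** If `A`, `B` are closed topological annuli of moduli `≥ 2ε`
enclosing bounded complementary components `U`, `V` such that `U ∪ V` is an open
topological disk and `A ∪ U ∪ B ∪ V` is a closed Jordan disk, then the enclosed annulus
`A □ B = (A ∪ U ∪ B ∪ V) ∖ (U ∪ V)` has modulus at least `ε`: the width of the family of
curves in it joining its inner to its outer boundary is at most `1/ε`. -/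
theorem enclosed_annuli
    (ε : ℝ) (hε : 0 < ε)
    (αA αB : ℂ → ℂ)
    (hAc : ContinuousOn αA (closedBall 0 2 \ ball 0 1))
    (hAi : Set.InjOn αA (closedBall 0 2 \ ball 0 1))
    (hBc : ContinuousOn αB (closedBall 0 2 \ ball 0 1))
    (hBi : Set.InjOn αB (closedBall 0 2 \ ball 0 1))
    (U V : Set ℂ)
    (hU : ∃ z ∈ (annCarrier αA)ᶜ, U = connectedComponentIn (annCarrier αA)ᶜ z)
    (hUb : IsBounded U)
    (hV : ∃ z ∈ (annCarrier αB)ᶜ, V = connectedComponentIn (annCarrier αB)ᶜ z)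
    (hVb : IsBounded V)
    (hopen : IsOpen (U ∪ V))
    (hdisc : Nonempty (↥(U ∪ V) ≃ₜ (ℝ × ℝ)))
    (hjordan : ∃ φ : ℂ → ℂ, ContinuousOn φ (closedBall 0 1) ∧
        Set.InjOn φ (closedBall 0 1) ∧
        annCarrier αA ∪ U ∪ annCarrier αB ∪ V = φ '' closedBall 0 1)
    (hmA : ENNReal.ofReal (2 * ε) ≤ annModulus αA)
    (hmB : ENNReal.ofReal (2 * ε) ≤ annModulus αB) :
    widthIn ((annCarrier αA ∪ U ∪ annCarrier αB ∪ V) \ (U ∪ V))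
        (frontier (U ∪ V)) (frontier (annCarrier αA ∪ U ∪ annCarrier αB ∪ V))
      ≤ ENNReal.ofReal (1 / ε) :=
  (enclosed_annuli_general hAc hAi hBc hBi ⟨hU, hUb⟩ ⟨hV, hVb⟩).trans
    (inv_add_inv_le_ofReal_one_div hε hmA hmB)
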